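/- Let P be a polynomial over ℂ with deg P = d ≥ 2. Then the polynomials X·P′ − P and P′ (the numerator and denominator of the Newton map N_P(z) = (z·P′(z) − P(z))/P′(z)) are coprime in ℂ[X] if and only if P has exactly d distinct complex roots (equivalently, if and only if P is squarefree). This expresses that the Newton map N_P has degree d exactly when P has d distinct roots. -/

import Mathlib

open Polynomial

theorem isCoprime_mul_derivative_sub_iff_separable {R : Type*} [CommRing R] (P Q : R[X]) :
    IsCoprime (Q * derivative P - P) (derivative P) ↔ P.Separable :=
  IsCoprime.mul_sub_right_left_iff.trans P.separable_def.symm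

theorem card_toFinset_roots_eq_natDegree_iff_separable {K : Type*} [Field K] [DecidableEq K]
    {P : K[X]} (h0 : P ≠ 0) (hP : P.Splits) :
    P.roots.toFinset.card = P.natDegree ↔ P.Separable := by
  rw [hP.natDegree_eq_card_roots, Multiset.toFinset_card_eq_card_iff_nodup,
    nodup_roots_iff_of_splits h0 hP]

theorem newton_map_degree_iff_distinct_roots_general {K : Type*} [Field K] [DecidableEq K]
    {P : K[X]} (h0 : P ≠ 0) (hP : P.Splits) :
    IsCoprime (X * derivative P - P) (derivative P) ↔ P.roots.toFinset.card = P.natDegree :=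
  (isCoprime_mul_derivative_sub_iff_separable P X).trans
    (card_toFinset_roots_eq_natDegree_iff_separable h0 hP).symm

/-- For a polynomial `P` over `ℂ` with `deg P = d ≥ 2`, the numerator `X·P' - P` and the
denominator `P'` of the Newton map `N_P(z) = (z·P'(z) - P(z))/P'(z)` are coprime in `ℂ[X]`
if and only if `P` has exactly `d` distinct complex roots. -/
theorem newton_map_degree_iff_distinct_roots (P : Polynomial ℂ) (hd : 2 ≤ P.natDegree) :
    IsCoprime (X * Polynomial.derivative P - P) (Polynomial.derivative P) ↔
      P.roots.toFinset.card = P.natDegree :=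
  newton_map_degree_iff_distinct_roots_general (ne_zero_of_natDegree_gt hd) (IsAlgClosed.splits P)
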